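/- arXiv:1204.4383 — 9 statements merged into one kernel-verified Lean document; each statement's English description precedes it below -/
import Mathlib

section
/- Let M be a smooth manifold, let F, H, V be smooth vector fields on M, and let λ, I, J, K be smooth real-valued functions on M satisfying the commutation relations [V,F] = H + (Vλ)·V, [H,V] = F + I·H + (J−λ)·V, and [F,H] = (K − Hλ − λJ + λ²)·V − λ·F − (λI)·H. Then for every smooth function u : M → ℝ the Pestov identity holds pointwise: 2·Hu·V(Fu) = (Fu)² + (Hu)² − (K − Hλ − λJ + λ²)·(Vu)² + F(Hu·Vu) − H(Vu·Fu) + V(Hu·Fu) + Fu·(I·Hu + J·Vu) + Hu·Vu·(λI + Vλ). -/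
open scoped Manifold

/-- The purely algebraic Pestov identity for derivations of a commutative algebra. -/
theorem pestov_aux {A : Type*} [CommRing A] [Algebra ℝ A] (F H V : Derivation ℝ A A)
    (lam i j k : A)
    (h1 : ⁅V, F⁆ = H + (V lam) • V)
    (h2 : ⁅H, V⁆ = F + i • H + (j - lam) • V)
    (h3 : ⁅F, H⁆ = (k - H lam - lam * j + lam ^ 2) • V - lam • F - (lam * i) • H) (u : A) :
      2 * H u * V (F u)
        = (F u) ^ 2 + (H u) ^ 2 - (k - H lam - lam * j + lam ^ 2) * (V u) ^ 2
          + F (H u * V u) - H (V u * F u) + V (H u * F u)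
          + F u * (i * H u + j * V u) + H u * V u * (lam * i + V lam) := by
  have e1 := DFunLike.congr_fun h1 u
  have e2 := DFunLike.congr_fun h2 u
  have e3 := DFunLike.congr_fun h3 u
  simp only [Derivation.commutator_apply, Derivation.add_apply, Derivation.sub_apply,
    Derivation.smul_apply, smul_eq_mul] at e1 e2 e3
  simp only [Derivation.leibniz, smul_eq_mul]
  linear_combination H u * e1 - V u * e3 + F u * e2

/-- **Pestov identity** for a generalized thermostat, stated algebraically.
Smooth vector fields on the smooth manifold `M` are modelled as derivations of the
algebra `C^⊤⟮Im, M; ℝ⟯` of smooth real-valued functions; for a vector field `X` and a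
smooth function `f`, `X f` is the derivative of `f` along `X`, `⁅X, Y⁆` is the Lie
bracket, and `f • X` is the pointwise scalar multiple. -/
theorem stmt_0
    {E : Type*} [NormedAddCommGroup E] [NormedSpace ℝ E]
    {Hm : Type*} [TopologicalSpace Hm] (Im : ModelWithCorners ℝ E Hm)
    {M : Type*} [TopologicalSpace M] [ChartedSpace Hm M]
    (F H V : Derivation ℝ C^(⊤ : ℕ∞)⟮Im, M; ℝ⟯ C^(⊤ : ℕ∞)⟮Im, M; ℝ⟯)
    (lam i j k : C^(⊤ : ℕ∞)⟮Im, M; ℝ⟯)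
    (h1 : ⁅V, F⁆ = H + (V lam) • V)
    (h2 : ⁅H, V⁆ = F + i • H + (j - lam) • V)
    (h3 : ⁅F, H⁆ = (k - H lam - lam * j + lam ^ 2) • V - lam • F - (lam * i) • H) :
    ∀ u : C^(⊤ : ℕ∞)⟮Im, M; ℝ⟯,
      2 * H u * V (F u)
        = (F u) ^ 2 + (H u) ^ 2 - (k - H lam - lam * j + lam ^ 2) * (V u) ^ 2
          + F (H u * V u) - H (V u * F u) + V (H u * F u)
          + F u * (i * H u + j * V u) + H u * V u * (lam * i + V lam) := by
  exact fun u => pestov_aux F H V lam i j k h1 h2 h3 u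
end

section
/- Let M be a smooth manifold, let F, H, V be smooth vector fields on M, and let λ be a smooth real-valued function on M satisfying the single commutation relation [V,F] = H + (Vλ)·V. Then for every smooth function u : M → ℝ the following identity holds pointwise: (F(Vu))² = (V(Fu))² + (Hu)² − ((Vλ)·Vu)² − 2·V(Fu)·Hu − F((Vλ)·(Vu)²) + (Vu)²·F(Vλ). -/
open scoped Manifold

/-- The pointwise identity for `(F(Vu))²` following from the single commutation relation
`[V,F] = H + (Vλ)·V`. Smooth vector fields on the smooth manifold `M` are modelled as
derivations of the algebra `C^⊤⟮Im, M; ℝ⟯` of smooth real-valued functions; for a vector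
field `Y` and a smooth function `f`, `Y f` is the derivative of `f` along `Y`, `⁅Y, Z⁆`
is the Lie bracket, and `f • Y` is the pointwise scalar multiple. -/
theorem stmt_2
    {E : Type*} [NormedAddCommGroup E] [NormedSpace ℝ E]
    {Hm : Type*} [TopologicalSpace Hm] (Im : ModelWithCorners ℝ E Hm)
    {M : Type*} [TopologicalSpace M] [ChartedSpace Hm M]
    (F H V : Derivation ℝ C^(⊤ : ℕ∞)⟮Im, M; ℝ⟯ C^(⊤ : ℕ∞)⟮Im, M; ℝ⟯)
    (lam : C^(⊤ : ℕ∞)⟮Im, M; ℝ⟯)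
    (h1 : ⁅V, F⁆ = H + (V lam) • V) :
    ∀ u : C^(⊤ : ℕ∞)⟮Im, M; ℝ⟯,
      (F (V u)) ^ 2
        = (V (F u)) ^ 2 + (H u) ^ 2 - ((V lam) * V u) ^ 2 - 2 * V (F u) * H u
          - F ((V lam) * (V u) ^ 2) + (V u) ^ 2 * F (V lam) := by
  intro u
  have h := congrArg (fun D => D u) h1
  simp only [Derivation.commutator_apply, Derivation.add_apply, Derivation.smul_apply,
    smul_eq_mul] at h
  have hF : F ((V lam) * (V u) ^ 2)
      = V lam * (2 * V u * F (V u)) + (V u) ^ 2 * F (V lam) := by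
    rw [pow_two, Derivation.leibniz, Derivation.leibniz]
    simp only [smul_eq_mul]
    ring
  rw [hF]
  have hH : H u = V (F u) - F (V u) - V lam * V u := by
    rw [h]; ring
  rw [hH]
  ring
end

section
/- Let A > 0 and D ∈ ℝ, and define w : (D/(A√5), ∞) → ℝ by w(t) = A/(1 − e^{−A√5·t + D}) + (A(√5−1)/2)·(1 + e^{−A√5·t + D})/(1 − e^{−A√5·t + D}). Then w is differentiable and satisfies w'(t) − A·w(t) + w(t)² − A² = 0 for all t > D/(A√5). -/
/-- The explicit function
`w(t) = A/(1 − e^{−A√5·t + D}) + (A(√5−1)/2)·(1 + e^{−A√5·t + D})/(1 − e^{−A√5·t + D})`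
solves the autonomous Riccati equation `w' − A·w + w² − A² = 0` on `(D/(A√5), ∞)`. -/
theorem stmt_6 (A D : ℝ) (hA : 0 < A) (w : ℝ → ℝ)
    (hw : ∀ t : ℝ, w t =
      A / (1 - Real.exp (-(A * Real.sqrt 5 * t) + D))
        + (A * (Real.sqrt 5 - 1) / 2)
          * (1 + Real.exp (-(A * Real.sqrt 5 * t) + D))
          / (1 - Real.exp (-(A * Real.sqrt 5 * t) + D))) :
    ∀ t > D / (A * Real.sqrt 5),
      HasDerivAt w (A * w t - (w t) ^ 2 + A ^ 2) t := by
  intro t ht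
  have hs : Real.sqrt 5 ^ 2 = 5 := Real.sq_sqrt (by norm_num)
  have hs0 : 0 < Real.sqrt 5 := Real.sqrt_pos.mpr (by norm_num)
  have hlt : D < t * (A * Real.sqrt 5) := (div_lt_iff₀ (by positivity)).mp ht
  have hE1 : Real.exp (-(A * Real.sqrt 5 * t) + D) < 1 := by
    rw [Real.exp_lt_one_iff]
    linarith
  have hE : HasDerivAt (fun t : ℝ => Real.exp (-(A * Real.sqrt 5 * t) + D))
      (Real.exp (-(A * Real.sqrt 5 * t) + D) * (-(A * Real.sqrt 5 * 1))) t :=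
    ((((hasDerivAt_id t).const_mul (A * Real.sqrt 5)).neg).add_const D).exp
  have hne : 1 - Real.exp (-(A * Real.sqrt 5 * t) + D) ≠ 0 := by linarith
  have hden := hE.const_sub 1
  have h := ((hasDerivAt_const t A).div hden hne).add
    (((hE.const_add 1).const_mul (A * (Real.sqrt 5 - 1) / 2)).div hden hne)
  have hwf : w = _ := funext hw
  rw [hw t, hwf]
  refine h.congr_deriv ?_
  generalize Real.exp (-(A * Real.sqrt 5 * t) + D) = E at *
  generalize Real.sqrt 5 = s at *
  field_simp
  have h5 : s ^ 2 - 5 = 0 := by linarith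
  ring_nf
  simp only [hs]
  ring
end

section
/- Let A > 0 and E ∈ ℝ, and define w : (−E/(A√5), ∞) → ℝ by w(t) = −A·e^{A√5·t + E}/(e^{A√5·t + E} − 1) + (A(1+√5)/2)·(e^{A√5·t + E} + 1)/(e^{A√5·t + E} − 1). Then w is differentiable and satisfies w'(t) + A·w(t) + w(t)² − A² = 0 for all t > −E/(A√5). -/
/-- The explicit function
`w(t) = −A·e^{A√5·t + E}/(e^{A√5·t + E} − 1) + (A(1+√5)/2)·(e^{A√5·t + E} + 1)/(e^{A√5·t + E} − 1)`
solves the autonomous Riccati equation `w' + A·w + w² − A² = 0` on `(−E/(A√5), ∞)`. -/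
theorem stmt_7 (A E : ℝ) (hA : 0 < A) (w : ℝ → ℝ)
    (hw : ∀ t : ℝ, w t =
      -A * Real.exp (A * Real.sqrt 5 * t + E) / (Real.exp (A * Real.sqrt 5 * t + E) - 1)
        + (A * (1 + Real.sqrt 5) / 2)
          * (Real.exp (A * Real.sqrt 5 * t + E) + 1)
          / (Real.exp (A * Real.sqrt 5 * t + E) - 1)) :
    ∀ t > -E / (A * Real.sqrt 5),
      HasDerivAt w (-(A * w t) - (w t) ^ 2 + A ^ 2) t := by
  intro t ht
  have hs : 0 < Real.sqrt 5 := Real.sqrt_pos.mpr (by norm_num)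
  have hs2 : Real.sqrt 5 ^ 2 = 5 := Real.sq_sqrt (by norm_num)
  have hpos : 0 < A * Real.sqrt 5 * t + E := by
    have h := (div_lt_iff₀ (mul_pos hA hs)).mp ht
    linarith
  have hx : Real.exp (A * Real.sqrt 5 * t + E) - 1 ≠ 0 := by
    have := Real.one_lt_exp_iff.mpr hpos
    linarith
  have hlin : HasDerivAt (fun t : ℝ => A * Real.sqrt 5 * t + E) (A * Real.sqrt 5) t := by
    simpa using ((hasDerivAt_id t).const_mul (A * Real.sqrt 5)).add_const E
  have he := hlin.exp
  have h1 := (he.const_mul (-A)).div (he.sub_const 1) hx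
  have h2 := ((he.add_const 1).const_mul (A * (1 + Real.sqrt 5) / 2)).div (he.sub_const 1) hx
  have h := h1.add h2
  have hfun : w = _ := funext hw
  rw [hw t, hfun]
  refine h.congr_deriv ?_
  generalize Real.exp (A * Real.sqrt 5 * t + E) = x at hx ⊢
  generalize Real.sqrt 5 = s at hs2 ⊢
  field_simp
  have hs3 : s ^ 3 = 5 * s := by rw [pow_succ, hs2]
  ring_nf
  simp only [hs2]
  ring
end

section
/- Let A > 0 and D ∈ ℝ, and let w : (D/(A√5), ∞) → ℝ be given by w(t) = A/(1 − e^{−A√5·t + D}) + (A(√5−1)/2)·(1 + e^{−A√5·t + D})/(1 − e^{−A√5·t + D}). Then w is strictly decreasing on (D/(A√5), ∞), satisfies w(t) > A(1+√5)/2 for every t > D/(A√5), and w(t) → A(1+√5)/2 as t → +∞. -/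
open Set Filter

/-- The barrier solution
`w(t) = A/(1 − e^{−A√5·t + D}) + (A(√5−1)/2)·(1 + e^{−A√5·t + D})/(1 − e^{−A√5·t + D})`
is strictly decreasing on `(D/(A√5), ∞)`, stays above `A(1+√5)/2` there, and tends to
`A(1+√5)/2` as `t → +∞`. -/
theorem stmt_8 (A D : ℝ) (hA : 0 < A) (w : ℝ → ℝ)
    (hw : ∀ t : ℝ, w t =
      A / (1 - Real.exp (-(A * Real.sqrt 5 * t) + D))
        + (A * (Real.sqrt 5 - 1) / 2)
          * (1 + Real.exp (-(A * Real.sqrt 5 * t) + D))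
          / (1 - Real.exp (-(A * Real.sqrt 5 * t) + D))) :
    StrictAntiOn w (Ioi (D / (A * Real.sqrt 5))) ∧
      (∀ t ∈ Ioi (D / (A * Real.sqrt 5)), A * (1 + Real.sqrt 5) / 2 < w t) ∧
      Tendsto w atTop (nhds (A * (1 + Real.sqrt 5) / 2)) := by
  have h5 : 0 < Real.sqrt 5 := Real.sqrt_pos.mpr (by norm_num)
  have hk : 0 < A * Real.sqrt 5 := mul_pos hA h5
  have hx : ∀ t ∈ Ioi (D / (A * Real.sqrt 5)),
      0 < 1 - Real.exp (-(A * Real.sqrt 5 * t) + D) := by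
    intro t ht
    have h1 : D < t * (A * Real.sqrt 5) := (div_lt_iff₀ hk).mp ht
    have h2 : Real.exp (-(A * Real.sqrt 5 * t) + D) < 1 :=
      Real.exp_lt_one_iff.mpr (by linarith)
    linarith
  have hw' : ∀ t ∈ Ioi (D / (A * Real.sqrt 5)), w t =
      A * Real.sqrt 5 / (1 - Real.exp (-(A * Real.sqrt 5 * t) + D))
        - A * (Real.sqrt 5 - 1) / 2 := by
    intro t ht
    have h := (hx t ht).ne'
    rw [hw]
    field_simp
    ring
  refine ⟨?_, ?_, ?_⟩
  · intro s hs t ht hst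
    rw [hw' s hs, hw' t ht]
    have h1 : Real.exp (-(A * Real.sqrt 5 * t) + D) < Real.exp (-(A * Real.sqrt 5 * s) + D) :=
      Real.exp_lt_exp.mpr (by linarith [mul_lt_mul_of_pos_left hst hk])
    have h2 := div_lt_div_of_pos_left hk (hx s hs) (sub_lt_sub_left h1 1)
    linarith
  · intro t ht
    rw [hw' t ht]
    have h2 : A * Real.sqrt 5 < A * Real.sqrt 5 / (1 - Real.exp (-(A * Real.sqrt 5 * t) + D)) := by
      rw [lt_div_iff₀ (hx t ht)]
      nlinarith [mul_pos hk (Real.exp_pos (-(A * Real.sqrt 5 * t) + D))]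
    linarith
  · have h1 : Tendsto (fun t : ℝ => Real.exp (-(A * Real.sqrt 5 * t) + D)) atTop (nhds 0) := by
      apply Real.tendsto_exp_atBot.comp
      apply tendsto_atBot_add_const_right
      exact tendsto_neg_atTop_atBot.comp (tendsto_id.const_mul_atTop hk)
    have h2 := ((tendsto_const_nhds (x := A * Real.sqrt 5)).div
      ((tendsto_const_nhds (x := (1 : ℝ))).sub h1) (by norm_num)).sub
      (tendsto_const_nhds (x := A * (Real.sqrt 5 - 1) / 2))
    have h3 : A * Real.sqrt 5 / (1 - 0) - A * (Real.sqrt 5 - 1) / 2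
        = A * (1 + Real.sqrt 5) / 2 := by ring
    rw [h3] at h2
    refine h2.congr' ?_
    filter_upwards [Ioi_mem_atTop (D / (A * Real.sqrt 5))] with t ht
    exact (hw' t ht).symm
end

section
/- Let A > 0, t₀ ∈ ℝ, T ∈ (t₀, ∞], and let k, c : [t₀, T) → ℝ be continuous with |k(t)| ≤ A² and |c(t)| ≤ A for all t. Let r, w : [t₀, T) → ℝ be differentiable functions satisfying r'(t) + r(t)² + k(t) − c(t)·r(t) = 0 and w'(t) − A·w(t) + w(t)² − A² = 0 on [t₀, T), with w(t₀) = r(t₀) and r(t₀) > A(1+√5)/2. Then r(t) ≤ w(t) for all t ∈ [t₀, T). -/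
open Set

/-- Comparison of a solution of the perturbed Riccati equation
`r' + r² + k − c·r = 0` (with `|k| ≤ A²`, `|c| ≤ A`) with the barrier solution of
`w' − A·w + w² − A² = 0` on `[t₀, T)`, `T ∈ (t₀, ∞]`: if `w(t₀) = r(t₀)` and
`r(t₀) > A(1+√5)/2`, then `r ≤ w` throughout. -/
theorem stmt_10 (A t₀ : ℝ) (hA : 0 < A) (T : EReal) (hT : (t₀ : EReal) < T)
    (k c r w : ℝ → ℝ)
    (hk : ContinuousOn k {t : ℝ | t₀ ≤ t ∧ (t : EReal) < T})
    (hc : ContinuousOn c {t : ℝ | t₀ ≤ t ∧ (t : EReal) < T})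
    (hkb : ∀ t, t₀ ≤ t → (t : EReal) < T → |k t| ≤ A ^ 2)
    (hcb : ∀ t, t₀ ≤ t → (t : EReal) < T → |c t| ≤ A)
    (hr : ∀ t, t₀ ≤ t → (t : EReal) < T →
      HasDerivWithinAt r (c t * r t - r t ^ 2 - k t) {t : ℝ | t₀ ≤ t ∧ (t : EReal) < T} t)
    (hw : ∀ t, t₀ ≤ t → (t : EReal) < T →
      HasDerivWithinAt w (A * w t - w t ^ 2 + A ^ 2) {t : ℝ | t₀ ≤ t ∧ (t : EReal) < T} t)
    (hinit : w t₀ = r t₀)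
    (hbig : A * (1 + Real.sqrt 5) / 2 < r t₀) :
    ∀ t, t₀ ≤ t → (t : EReal) < T → r t ≤ w t := by
  intro b hb hbT
  have hsub : Icc t₀ b ⊆ {t : ℝ | t₀ ≤ t ∧ (t : EReal) < T} := fun x hx =>
    ⟨hx.1, lt_of_le_of_lt (EReal.coe_le_coe_iff.2 hx.2) hbT⟩
  have key : ∀ (f : ℝ → ℝ) (d x : ℝ), x ∈ Ico t₀ b →
      HasDerivWithinAt f d {t : ℝ | t₀ ≤ t ∧ (t : EReal) < T} x →
      HasDerivWithinAt f d (Ici x) x := by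
    intro f d x hx h
    have h1 : HasDerivWithinAt f d (Icc x b) x :=
      h.mono ((Icc_subset_Icc_left hx.1).trans hsub)
    exact h1.mono_of_mem_nhdsWithin (Icc_mem_nhdsGE hx.2)
  have hrc : ContinuousOn r (Icc t₀ b) := fun x hx =>
    ((hr x (hsub hx).1 (hsub hx).2).continuousWithinAt).mono hsub
  have hwc : ContinuousOn w (Icc t₀ b) := fun x hx =>
    ((hw x (hsub hx).1 (hsub hx).2).continuousWithinAt).mono hsub
  have hr0 : 0 < r t₀ := lt_trans (by positivity) hbig
  have hA2 : 0 < A ^ 2 := by positivity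
  have hwpos : ∀ x ∈ Icc t₀ b, 0 ≤ w x := by
    intro x hx
    have := image_le_of_deriv_right_lt_deriv_boundary' (f := fun x => - w x)
      (f' := fun x => -(A * w x - w x ^ 2 + A ^ 2)) (B := fun _ => (0 : ℝ)) (B' := fun _ => 0)
      hwc.neg
      (fun x hx => (key w _ x hx (hw x (hsub (Ico_subset_Icc_self hx)).1
        (hsub (Ico_subset_Icc_self hx)).2)).neg)
      (by linarith) continuousOn_const
      (fun x _ => hasDerivWithinAt_const _ _ _)
      (by
        intro x _ h
        have h0 : w x = 0 := by simpa using h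
        simp only [h0]; nlinarith) hx
    simpa using this
  have main : ∀ ε : ℝ, 0 < ε → r b ≤ w b + ε * Real.exp ((A + 1) * (b - t₀)) := by
    intro ε hε
    have hE : ∀ x, HasDerivAt (fun x => ε * Real.exp ((A + 1) * (x - t₀)))
        (ε * (Real.exp ((A + 1) * (x - t₀)) * ((A + 1) * 1))) x := fun x =>
      ((((hasDerivAt_id x).sub_const t₀).const_mul (A + 1)).exp).const_mul ε
    refine image_le_of_deriv_right_lt_deriv_boundary' (f := r)
      (f' := fun x => c x * r x - r x ^ 2 - k x)
      (B := fun x => w x + ε * Real.exp ((A + 1) * (x - t₀)))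
      (B' := fun x => (A * w x - w x ^ 2 + A ^ 2) +
        ε * (Real.exp ((A + 1) * (x - t₀)) * ((A + 1) * 1)))
      hrc
      (fun x hx => key r _ x hx (hr x (hsub (Ico_subset_Icc_self hx)).1
        (hsub (Ico_subset_Icc_self hx)).2))
      ?_ ?_ ?_ ?_ (right_mem_Icc.2 hb)
    · have : 0 < ε * Real.exp ((A + 1) * (t₀ - t₀)) := by positivity
      linarith
    · exact hwc.add (by fun_prop)
    · intro x hx
      exact (key w _ x hx (hw x (hsub (Ico_subset_Icc_self hx)).1
        (hsub (Ico_subset_Icc_self hx)).2)).add (hE x).hasDerivWithinAt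
    · intro x hx h
      have hx' := Ico_subset_Icc_self hx
      have hw0 := hwpos x hx'
      have hk1 := (abs_le.1 (hkb x (hsub hx').1 (hsub hx').2)).1
      have hc1 := (abs_le.1 (hcb x (hsub hx').1 (hsub hx').2)).2
      have hδ : 0 < ε * Real.exp ((A + 1) * (x - t₀)) := by positivity
      have e : ε * (Real.exp ((A + 1) * (x - t₀)) * ((A + 1) * 1)) =
        (A + 1) * (ε * Real.exp ((A + 1) * (x - t₀))) := by ring
      rw [e]
      generalize ε * Real.exp ((A + 1) * (x - t₀)) = δ at h hδ ⊢
      have h1 : c x * r x ≤ A * r x := mul_le_mul_of_nonneg_right hc1 (by linarith)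
      rw [h] at h1 ⊢
      nlinarith [mul_nonneg hw0 hδ.le, sq_nonneg δ]
  by_contra hcon
  have hM := Real.exp_pos ((A + 1) * (b - t₀))
  have hd : 0 < r b - w b := by linarith [not_le.1 hcon]
  have := main ((r b - w b) / 2 / Real.exp ((A + 1) * (b - t₀))) (by positivity)
  rw [div_mul_cancel₀ _ hM.ne'] at this
  linarith
end

section
/- Let A > 0, t₀ ∈ ℝ, and let k, c : [t₀, ∞) → ℝ be continuous with |k(t)| ≤ A² and |c(t)| ≤ A for all t ≥ t₀. If r : [t₀, ∞) → ℝ is differentiable and satisfies the Riccati equation r'(t) + r(t)² + k(t) − c(t)·r(t) = 0 for all t ≥ t₀, then r(t) ≥ −A(1+√5)/2 for all t ≥ t₀. -/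
open Set

/-- A solution of the Riccati equation `r' + r² + k − c·r = 0` defined on all of
`[t₀, ∞)`, with `|k| ≤ A²` and `|c| ≤ A`, satisfies `r ≥ −A(1+√5)/2`. -/
theorem stmt_11 (A t₀ : ℝ) (hA : 0 < A) (k c r : ℝ → ℝ)
    (hk : ContinuousOn k (Ici t₀)) (hc : ContinuousOn c (Ici t₀))
    (hkb : ∀ t ∈ Ici t₀, |k t| ≤ A ^ 2) (hcb : ∀ t ∈ Ici t₀, |c t| ≤ A)
    (hr : ∀ t ∈ Ici t₀, HasDerivWithinAt r (c t * r t - r t ^ 2 - k t) (Ici t₀) t) :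
    ∀ t ∈ Ici t₀, -(A * (1 + Real.sqrt 5) / 2) ≤ r t := by
  intro s hs
  by_contra! hlt
  have h5 : Real.sqrt 5 ^ 2 = 5 := Real.sq_sqrt (by norm_num)
  have h50 : 0 ≤ Real.sqrt 5 := Real.sqrt_nonneg 5
  obtain ⟨m, hm⟩ : ∃ m, m = A * (1 + Real.sqrt 5) / 2 := ⟨_, rfl⟩
  rw [← hm] at hlt
  have hm2 : m ^ 2 = A * m + A ^ 2 := by
    rw [hm]; linear_combination (A ^ 2 / 4) * h5
  have hmA : A ≤ 2 * m := by rw [hm]; nlinarith [mul_nonneg hA.le h50]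
  -- key differential inequality
  have key : ∀ t ∈ Ici t₀, r t < -m →
      c t * r t - r t ^ 2 - k t ≤ -(-r t - m) ^ 2 := by
    intro t ht h
    have h1 := (abs_le.mp (hkb t ht)).1
    have h2 := (abs_le.mp (hcb t ht)).1
    have h3 : c t * r t ≤ -A * r t := by nlinarith
    nlinarith [mul_nonneg (sub_nonneg.2 hmA) (by linarith : 0 ≤ -r t - m)]
  have hs' : t₀ ≤ s := hs
  obtain ⟨d, hd⟩ : ∃ d, d = -r s - m := ⟨_, rfl⟩
  have hd0 : 0 < d := by linarith
  have hsub : ∀ t, s ≤ t → t ∈ Ici t₀ := fun t h => hs'.trans h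
  have hder : ∀ t, s ≤ t →
      HasDerivWithinAt r (c t * r t - r t ^ 2 - k t) (Ici t) t := fun t h =>
    (hr t (hsub t h)).mono (Ici_subset_Ici.2 (hsub t h))
  have hcont : ∀ b, ContinuousOn r (Icc s b) := fun b t ht =>
    ((hr t (hsub t ht.1)).mono (fun x hx => hsub x hx.1)).continuousWithinAt
  have hstay : ∀ b, ∀ t ∈ Icc s b, r t ≤ r s := by
    intro b t ht
    refine image_le_of_deriv_right_lt_deriv_boundary (B := fun _ => r s) (B' := fun _ => 0)
      (hcont b) (fun x hx => hder x hx.1) le_rfl (fun x => hasDerivAt_const x _) ?_ ht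
    intro x hx hxe
    have hxe' : r x = r s := hxe
    have := key x (hsub x hx.1) (by linarith)
    have h2 : 0 < (-r x - m) ^ 2 := by rw [hxe', ← hd]; positivity
    linarith
  have hpos : ∀ t, s ≤ t → 0 < -r t - m := fun t h => by
    have := hstay t t ⟨h, le_rfl⟩
    linarith
  have hfin : (-r (s + 1 / d) - m)⁻¹ ≤ d⁻¹ - ((s + 1 / d) - s) := by
    have hsd : s ≤ s + 1 / d := by have : 0 < 1 / d := by positivity
                                   linarith
    refine image_le_of_deriv_right_le_deriv_boundary (a := s) (b := s + 1 / d)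
      (f := fun t => (-r t - m)⁻¹)
      (f' := fun t => -(-(c t * r t - r t ^ 2 - k t)) / (-r t - m) ^ 2)
      (B := fun t => d⁻¹ - (t - s)) (B' := fun _ => -1) ?_ ?_ ?_ ?_ ?_ ?_ ⟨hsd, le_rfl⟩
    · exact (((hcont _).neg).sub continuousOn_const).inv₀ (fun x hx => (hpos x hx.1).ne')
    · intro x hx
      exact (((hder x hx.1).neg).sub_const m).inv (hpos x hx.1).ne'
    · simp [hd]
    · fun_prop
    · intro x hx
      exact (((hasDerivAt_id x).sub_const s).const_sub d⁻¹).hasDerivWithinAt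
    · intro x hx
      have hp := hpos x hx.1
      have := key x (hsub x hx.1) (by linarith)
      rw [div_le_iff₀ (by positivity)]
      linarith
  have hp := inv_pos.2 (hpos (s + 1 / d) (by have : 0 < 1 / d := by positivity
                                             linarith))
  rw [one_div] at *
  linarith
end

section
/- Let A > 0, t₁ ∈ ℝ, and let k, c : (−∞, t₁] → ℝ be continuous with |k(t)| ≤ A² and |c(t)| ≤ A for all t ≤ t₁. If r : (−∞, t₁] → ℝ is differentiable and satisfies the Riccati equation r'(t) + r(t)² + k(t) − c(t)·r(t) = 0 for all t ≤ t₁, then r(t) ≤ A(1+√5)/2 for all t ≤ t₁. -/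
open Set

/-- A solution of the Riccati equation `r' + r² + k − c·r = 0` defined on all of
`(−∞, t₁]`, with `|k| ≤ A²` and `|c| ≤ A`, satisfies `r ≤ A(1+√5)/2`. -/
theorem stmt_12 (A t₁ : ℝ) (hA : 0 < A) (k c r : ℝ → ℝ)
    (hk : ContinuousOn k (Iic t₁)) (hc : ContinuousOn c (Iic t₁))
    (hkb : ∀ t ∈ Iic t₁, |k t| ≤ A ^ 2) (hcb : ∀ t ∈ Iic t₁, |c t| ≤ A)
    (hr : ∀ t ∈ Iic t₁, HasDerivWithinAt r (c t * r t - r t ^ 2 - k t) (Iic t₁) t) :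
    ∀ t ∈ Iic t₁, r t ≤ A * (1 + Real.sqrt 5) / 2 := by
  intro t₀ ht₀
  by_contra! hlt
  have h5 : Real.sqrt 5 ^ 2 = 5 := Real.sq_sqrt (by norm_num)
  have h51 : 1 ≤ Real.sqrt 5 := Real.le_sqrt_of_sq_le (by norm_num)
  set p := A * (1 + Real.sqrt 5) / 2 with hp
  have hpp : p ^ 2 = A * p + A ^ 2 := by
    rw [hp]; linear_combination (A ^ 2 / 4) * h5
  have hpA : A ≤ p := by rw [hp]; nlinarith
  have key : ∀ t ∈ Iic t₁, p < r t → c t * r t - r t ^ 2 - k t ≤ -(r t - p) ^ 2 := by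
    intro t ht h
    have h1 := (abs_le.1 (hkb t ht)).1
    have h2 := (abs_le.1 (hcb t ht)).2
    have h3 : c t * r t ≤ A * r t := mul_le_mul_of_nonneg_right h2 (by linarith)
    nlinarith [mul_nonneg (sub_nonneg.2 h.le) (by linarith : 0 ≤ 2 * p - A)]
  have hda : ∀ t < t₁, HasDerivAt r (c t * r t - r t ^ 2 - k t) t := fun t ht =>
    (hr t ht.le).hasDerivAt (Iic_mem_nhds ht)
  have hcont : ContinuousOn r (Iic t₁) := fun t ht => (hr t ht).continuousWithinAt
  have ht₀' : t₀ ≤ t₁ := ht₀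
  have hbig : ∀ s ≤ t₀, p < r s := by
    intro s hs
    by_contra! hsp
    have := image_le_of_deriv_right_lt_deriv_boundary (f := r) (a := s) (b := t₀)
      (f' := fun t => c t * r t - r t ^ 2 - k t) (B := fun _ => (p + r t₀) / 2)
      (B' := fun _ => 0)
      (hcont.mono (fun x hx => hx.2.trans ht₀'))
      (fun x hx => (hda x (hx.2.trans_le ht₀')).hasDerivWithinAt)
      (by linarith) (fun x => hasDerivAt_const x _)
      (fun x hx hxe => by
        have hxp : p < r x := by rw [hxe]; linarith
        have := key x (hx.2.le.trans ht₀') hxp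
        have : 0 < (r x - p) ^ 2 := pow_pos (by linarith) 2
        linarith) (right_mem_Icc.2 hs)
    linarith
  have hu0 : 0 < (r t₀ - p)⁻¹ := inv_pos.2 (by linarith)
  have hs : t₀ - (r t₀ - p)⁻¹ ≤ t₀ := by linarith
  have hm : MonotoneOn (fun t => (r t - p)⁻¹ - t) (Iic t₀) := by
    apply monotoneOn_of_hasDerivWithinAt_nonneg (convex_Iic t₀)
      (f' := fun t => -(c t * r t - r t ^ 2 - k t) / (r t - p) ^ 2 - 1)
    · refine ContinuousOn.sub (ContinuousOn.inv₀ ((hcont.mono (Iic_subset_Iic.2 ht₀')).sub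
        continuousOn_const) fun x hx => ?_) continuousOn_id
      have := hbig x hx
      exact (sub_pos.2 this).ne'
    · intro x hx
      rw [interior_Iic] at hx
      have := hbig x (le_of_lt hx)
      exact ((((hda x (lt_of_lt_of_le hx ht₀')).sub_const p).fun_inv
        (sub_pos.2 this).ne').sub (hasDerivAt_id x)).hasDerivWithinAt
    · intro x hx
      rw [interior_Iic] at hx
      have h1 := hbig x (le_of_lt hx)
      have h2 := key x (le_trans (le_of_lt hx) ht₀') h1
      have h3 : 0 < (r x - p) ^ 2 := pow_pos (by linarith) 2
      rw [sub_nonneg, le_div_iff₀ h3]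
      linarith
  have h1 := hm (mem_Iic.2 hs) (mem_Iic.2 le_rfl) hs
  dsimp only at h1
  have h2 : 0 < (r (t₀ - (r t₀ - p)⁻¹) - p)⁻¹ := inv_pos.2 (by linarith [hbig _ hs])
  linarith
end

section
/- Let A > 0 and let k, c : ℝ → ℝ be continuous with |k(t)| ≤ A² and |c(t)| ≤ A for all t ∈ ℝ. If r : ℝ → ℝ is differentiable and satisfies the Riccati equation r'(t) + r(t)² + k(t) − c(t)·r(t) = 0 for all t ∈ ℝ, then |r(t)| ≤ A(1+√5)/2 for all t ∈ ℝ. -/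
theorem riccati_aux (A B : ℝ) (hA : 0 < A) (hBA : A < B) (hB : B ^ 2 = A * B + A ^ 2)
    (k c r : ℝ → ℝ)
    (hkb : ∀ t : ℝ, |k t| ≤ A ^ 2) (hcb : ∀ t : ℝ, |c t| ≤ A)
    (hr : ∀ t : ℝ, HasDerivAt r (c t * r t - r t ^ 2 - k t) t) (a : ℝ) :
    -B ≤ r a := by
  by_contra! h
  have key : ∀ t, r t < -B → c t * r t - r t ^ 2 - k t ≤ -((-r t - B) * (-r t + B - A)) := by
    intro t ht
    have h1 := abs_le.1 (hkb t)
    have h2 := abs_le.1 (hcb t)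
    nlinarith [mul_nonneg (by linarith [h2.1] : 0 ≤ c t + A) (by linarith : 0 ≤ -r t)]
  have le : ∀ t, a ≤ t → r t ≤ r a := by
    intro t hat
    refine image_le_of_deriv_right_lt_deriv_boundary (f := r) (a := a) (b := t)
      (f' := fun t => c t * r t - r t ^ 2 - k t) (B := fun _ => r a) (B' := fun _ => 0)
      (fun x _ => (hr x).continuousAt.continuousWithinAt)
      (fun x _ => (hr x).hasDerivWithinAt) le_rfl (fun x => hasDerivAt_const x _) ?_ ⟨hat, le_rfl⟩
    intro x _ hx
    have hx' : r x = r a := hx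
    have h1 := key x (by linarith)
    have h2 : 0 < (-r x - B) * (-r x + B - A) := mul_pos (by linarith) (by linarith)
    show c x * r x - r x ^ 2 - k x < 0
    linarith
  have hd : ∀ t, a ≤ t → HasDerivAt (fun t => (-r t - B)⁻¹ + t)
      (-(-(c t * r t - r t ^ 2 - k t)) / (-r t - B) ^ 2 + 1) t := by
    intro t ht
    have := le t ht
    exact ((((hr t).neg).sub_const B).fun_inv (by simp; linarith)).add (hasDerivAt_id t)
  have anti : AntitoneOn (fun t => (-r t - B)⁻¹ + t) (Set.Ici a) := by
    apply antitoneOn_of_deriv_nonpos (convex_Ici a)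
    · exact fun x hx => (hd x hx).continuousAt.continuousWithinAt
    · intro x hx
      rw [interior_Ici] at hx
      exact (hd x (le_of_lt hx)).differentiableAt.differentiableWithinAt
    · intro x hx
      rw [interior_Ici] at hx
      have hx' : a ≤ x := le_of_lt hx
      rw [(hd x hx').deriv]
      have h0 := le x hx'
      have h1 := key x (by linarith)
      have h2 : 0 < -r x - B := by linarith
      have h3 : -(-(c x * r x - r x ^ 2 - k x)) / (-r x - B) ^ 2 ≤ -1 := by
        rw [div_le_iff₀ (by positivity)]
        nlinarith
      linarith
  have hw : 0 < (-r a - B)⁻¹ := inv_pos.2 (by linarith)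
  have h1 : a ≤ a + (-r a - B)⁻¹ := by linarith
  have h2 := anti (Set.mem_Ici.2 le_rfl) (Set.mem_Ici.2 h1) h1
  have h3 := le _ h1
  have h4 : 0 < (-r (a + (-r a - B)⁻¹) - B)⁻¹ := inv_pos.2 (by linarith)
  simp only at h2
  linarith

/-- A solution of the Riccati equation `r' + r² + k − c·r = 0` defined on all of `ℝ`,
with `|k| ≤ A²` and `|c| ≤ A`, satisfies `|r| ≤ A(1+√5)/2`. -/
theorem stmt_13 (A : ℝ) (hA : 0 < A) (k c r : ℝ → ℝ)
    (hk : Continuous k) (hc : Continuous c)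
    (hkb : ∀ t : ℝ, |k t| ≤ A ^ 2) (hcb : ∀ t : ℝ, |c t| ≤ A)
    (hr : ∀ t : ℝ, HasDerivAt r (c t * r t - r t ^ 2 - k t) t) :
    ∀ t : ℝ, |r t| ≤ A * (1 + Real.sqrt 5) / 2 := by
  intro t
  have h5 : Real.sqrt 5 ^ 2 = 5 := Real.sq_sqrt (by norm_num)
  have h51 : 1 < Real.sqrt 5 := by
    rw [Real.lt_sqrt (by norm_num)]; norm_num
  have hBA : A < A * (1 + Real.sqrt 5) / 2 := by nlinarith
  have hB : (A * (1 + Real.sqrt 5) / 2) ^ 2 = A * (A * (1 + Real.sqrt 5) / 2) + A ^ 2 := by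
    linear_combination A ^ 2 / 4 * h5
  rw [abs_le]
  refine ⟨riccati_aux A _ hA hBA hB k c r hkb hcb hr t, ?_⟩
  have := riccati_aux A _ hA hBA hB (fun t => k (-t)) (fun t => -c (-t)) (fun t => -r (-t))
    (fun t => hkb _) (fun t => by rw [abs_neg]; exact hcb _) (fun t => by
      have h := ((hr (-t)).scomp t (hasDerivAt_neg t)).neg
      refine HasDerivAt.congr_deriv h ?_
      simp only [smul_eq_mul]
      ring) (-t)
  simp only [neg_neg] at this
  linarith
end
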